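/- arXiv:2105.03397 — 5 statements merged into one kernel-verified Lean document; each statement's English description precedes it below -/
import Mathlib

section
/- Let φ, μ, σ : ℝ → ℝ, let β ≥ 0, and let a < 0 < b be real numbers. Assume |φ(x) − μ(x)| ≤ β σ(x) for all x ∈ [a,b]. Let κ̂₁ ∈ ℝ be any lower bound of the set S⁻ = { min{x·(μ(x) − β σ(x)), x·(μ(x) + β σ(x))}/x² : x ∈ [a,b], x ≠ 0 } and let κ̂₂ ∈ ℝ be any upper bound of the set S⁺ = { max{x·(μ(x) − β σ(x)), x·(μ(x) + β σ(x))}/x² : x ∈ [a,b], x ≠ 0 }. Then φ belongs to the sector [κ̂₁, κ̂₂] on [a,b] \ {0}. -/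
/-- A function `φ` belongs to the sector `[κ₁, κ₂]` on a set `S ⊆ ℝ` if
`κ₁ x² ≤ x φ(x) ≤ κ₂ x²` for all `x ∈ S`. -/
def InSector (φ : ℝ → ℝ) (κ₁ κ₂ : ℝ) (S : Set ℝ) : Prop :=
  ∀ x ∈ S, κ₁ * x ^ 2 ≤ x * φ x ∧ x * φ x ≤ κ₂ * x ^ 2

theorem sector_bounds_from_uncertainty_set
    (φ μ σ : ℝ → ℝ) (β : ℝ) (hβ : 0 ≤ β) (a b : ℝ) (ha : a < 0) (hb : 0 < b)
    (hunc : ∀ x ∈ Set.Icc a b, |φ x - μ x| ≤ β * σ x)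
    (κhat₁ κhat₂ : ℝ)
    (hκhat₁ : ∀ r ∈ {r : ℝ | ∃ x ∈ Set.Icc a b, x ≠ 0 ∧
        r = min (x * (μ x - β * σ x)) (x * (μ x + β * σ x)) / x ^ 2}, κhat₁ ≤ r)
    (hκhat₂ : ∀ r ∈ {r : ℝ | ∃ x ∈ Set.Icc a b, x ≠ 0 ∧
        r = max (x * (μ x - β * σ x)) (x * (μ x + β * σ x)) / x ^ 2}, r ≤ κhat₂) :
    InSector φ κhat₁ κhat₂ (Set.Icc a b \ {0}) := by
  rintro x ⟨hx, hx0⟩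
  have hx0 : x ≠ 0 := hx0
  have hpos : 0 < x ^ 2 := by positivity
  have h1 := hκhat₁ _ ⟨x, hx, hx0, rfl⟩
  have h2 := hκhat₂ _ ⟨x, hx, hx0, rfl⟩
  rw [le_div_iff₀ hpos] at h1
  rw [div_le_iff₀ hpos] at h2
  obtain ⟨h3, h4⟩ := abs_le.mp (hunc x hx)
  have hl : μ x - β * σ x ≤ φ x := by linarith
  have hu : φ x ≤ μ x + β * σ x := by linarith
  rcases le_total 0 x with h | h
  · exact ⟨h1.trans ((min_le_left _ _).trans (mul_le_mul_of_nonneg_left hl h)),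
      (mul_le_mul_of_nonneg_left hu h).trans ((le_max_right _ _).trans h2)⟩
  · exact ⟨h1.trans ((min_le_right _ _).trans (mul_le_mul_of_nonpos_left hu h)),
      (mul_le_mul_of_nonpos_left hl h).trans ((le_max_left _ _).trans h2)⟩
end

section
/- Let φ, μ, σ : ℝ → ℝ, let β ≥ 0, and let a < 0 < b be real numbers. Assume |φ(x) − μ(x)| ≤ β σ(x) for all x ∈ [a,b]. Define S⁻ = { min{x·(μ(x) − β σ(x)), x·(μ(x) + β σ(x))}/x² : x ∈ [a,b], x ≠ 0 } and S⁺ = { max{x·(μ(x) − β σ(x)), x·(μ(x) + β σ(x))}/x² : x ∈ [a,b], x ≠ 0 }, and assume S⁻ is bounded below and S⁺ is bounded above. Set κ̂₁ = inf S⁻ and κ̂₂ = sup S⁺, and let κ₁ = inf { x φ(x)/x² : x ∈ [a,b], x ≠ 0 } and κ₂ = sup { x φ(x)/x² : x ∈ [a,b], x ≠ 0 } be the tightest sector bounds of φ on [a,b] \ {0}. Then [κ̂₁, κ̂₂] is an overapproximation of [κ₁, κ₂], i.e. κ̂₁ ≤ κ₁ and κ̂₂ ≥ κ₂. -/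
theorem sector_bounds_overapproximation
    (φ μ σ : ℝ → ℝ) (β : ℝ) (hβ : 0 ≤ β) (a b : ℝ) (ha : a < 0) (hb : 0 < b)
    (hunc : ∀ x ∈ Set.Icc a b, |φ x - μ x| ≤ β * σ x)
    (Sminus Splus Sphi : Set ℝ)
    (hSminus : Sminus = {r : ℝ | ∃ x ∈ Set.Icc a b, x ≠ 0 ∧
        r = min (x * (μ x - β * σ x)) (x * (μ x + β * σ x)) / x ^ 2})
    (hSplus : Splus = {r : ℝ | ∃ x ∈ Set.Icc a b, x ≠ 0 ∧
        r = max (x * (μ x - β * σ x)) (x * (μ x + β * σ x)) / x ^ 2})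
    (hSphi : Sphi = {r : ℝ | ∃ x ∈ Set.Icc a b, x ≠ 0 ∧ r = x * φ x / x ^ 2})
    (hbddminus : BddBelow Sminus) (hbddplus : BddAbove Splus) :
    sInf Sminus ≤ sInf Sphi ∧ sSup Sphi ≤ sSup Splus := by
  have hne : Sphi.Nonempty := by
    rw [hSphi]
    exact ⟨_, b, ⟨by linarith, le_rfl⟩, hb.ne', rfl⟩
  constructor
  · apply le_csInf hne
    intro r hr
    rw [hSphi] at hr
    obtain ⟨x, hx, hx0, rfl⟩ := hr
    have hmem : min (x * (μ x - β * σ x)) (x * (μ x + β * σ x)) / x ^ 2 ∈ Sminus := by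
      rw [hSminus]
      exact ⟨x, hx, hx0, rfl⟩
    refine (csInf_le hbddminus hmem).trans ?_
    have h := abs_le.mp (hunc x hx)
    refine div_le_div_of_nonneg_right ?_ (sq_nonneg x)
    rcases le_total 0 x with h0 | h0
    · exact (min_le_left _ _).trans (mul_le_mul_of_nonneg_left (by linarith [h.1]) h0)
    · exact (min_le_right _ _).trans (mul_le_mul_of_nonpos_left (by linarith [h.2]) h0)
  · apply csSup_le hne
    intro r hr
    rw [hSphi] at hr
    obtain ⟨x, hx, hx0, rfl⟩ := hr
    have hmem : max (x * (μ x - β * σ x)) (x * (μ x + β * σ x)) / x ^ 2 ∈ Splus := by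
      rw [hSplus]
      exact ⟨x, hx, hx0, rfl⟩
    refine le_trans ?_ (le_csSup hbddplus hmem)
    have h := abs_le.mp (hunc x hx)
    refine div_le_div_of_nonneg_right ?_ (sq_nonneg x)
    rcases le_total 0 x with h0 | h0
    · exact (mul_le_mul_of_nonneg_left (by linarith [h.2]) h0).trans (le_max_right _ _)
    · exact (mul_le_mul_of_nonpos_left (by linarith [h.1]) h0).trans (le_max_left _ _)
end

section
/- Let n ≥ 1, let P be a symmetric real 2n × 2n matrix with [0; Iₙ]ᵀ P [0; Iₙ] ⪯ 0 (negative semidefinite), and let κ₁, κ₂ ∈ ℝⁿ with κ₁ᵢ ≤ κ₂ᵢ for all i. Suppose that for every vertex θ of the box, i.e. every θ ∈ ℝⁿ with θᵢ ∈ {κ₁ᵢ, κ₂ᵢ} for all i, the matrix [Iₙ; Θ(θ)]ᵀ P [Iₙ; Θ(θ)] is positive semidefinite. Then for every θ ∈ ℝⁿ with κ₁ᵢ ≤ θᵢ ≤ κ₂ᵢ for all i, the matrix [Iₙ; Θ(θ)]ᵀ P [Iₙ; Θ(θ)] is positive semidefinite. -/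
open Matrix

/-- The `2n × n` matrix `[0; Iₙ]` obtained by stacking the zero matrix on top of `Iₙ`. -/
def stackZeroId (n : ℕ) : Matrix (Fin n ⊕ Fin n) (Fin n) ℝ :=
  Matrix.fromRows 0 1

/-- The `2n × n` matrix `[Iₙ; Θ(θ)]` obtained by stacking `Iₙ` on top of the diagonal
matrix `Θ(θ)` with diagonal entries `θ₁, …, θₙ`. -/
def stackIdDiag {n : ℕ} (θ : Fin n → ℝ) : Matrix (Fin n ⊕ Fin n) (Fin n) ℝ :=
  Matrix.fromRows 1 (Matrix.diagonal θ)

theorem multiplier_psd_on_box_of_psd_on_vertices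
    (n : ℕ) (hn : 1 ≤ n)
    (P : Matrix (Fin n ⊕ Fin n) (Fin n ⊕ Fin n) ℝ) (hP : P.IsSymm)
    (hP22 : (-((stackZeroId n)ᵀ * P * stackZeroId n)).PosSemidef)
    (κ₁ κ₂ : Fin n → ℝ) (hκ : ∀ i, κ₁ i ≤ κ₂ i)
    (hvert : ∀ θ : Fin n → ℝ, (∀ i, θ i = κ₁ i ∨ θ i = κ₂ i) →
      ((stackIdDiag θ)ᵀ * P * stackIdDiag θ).PosSemidef) :
    ∀ θ : Fin n → ℝ, (∀ i, κ₁ i ≤ θ i ∧ θ i ≤ κ₂ i) →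
      ((stackIdDiag θ)ᵀ * P * stackIdDiag θ).PosSemidef := by
  have hlin : ∀ (x y : Fin n → ℝ) (a b : ℝ), a + b = 1 →
      stackIdDiag (a • x + b • y) = a • stackIdDiag x + b • stackIdDiag y := by
    intro x y a b hab
    ext i j
    rcases i with i | i
    · by_cases h : i = j <;> simp [stackIdDiag, Matrix.one_apply, h, hab]
    · by_cases h : i = j <;> simp [stackIdDiag, Matrix.diagonal_apply, h]
  have hdiff : ∀ x y : Fin n → ℝ,
      stackIdDiag x - stackIdDiag y = stackZeroId n * Matrix.diagonal (x - y) := by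
    intro x y
    ext i j
    rcases i with i | i
    · simp [stackIdDiag, stackZeroId]
    · by_cases h : i = j <;>
        simp [stackIdDiag, stackZeroId, Matrix.fromRows_mul, Matrix.diagonal_apply, h]
  have hconv : Convex ℝ {θ : Fin n → ℝ |
      ((stackIdDiag θ)ᵀ * P * stackIdDiag θ).PosSemidef} := by
    intro x hx y hy a b ha hb hab
    simp only [Set.mem_ofPred_eq] at hx hy ⊢
    have key : (stackIdDiag (a • x + b • y))ᵀ * P * stackIdDiag (a • x + b • y)
        = a • ((stackIdDiag x)ᵀ * P * stackIdDiag x)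
          + b • ((stackIdDiag y)ᵀ * P * stackIdDiag y)
          + (a * b) • ((Matrix.diagonal (x - y))ᴴ *
              (-((stackZeroId n)ᵀ * P * stackZeroId n)) * Matrix.diagonal (x - y)) := by
      have e : (Matrix.diagonal (x - y))ᴴ *
              (-((stackZeroId n)ᵀ * P * stackZeroId n)) * Matrix.diagonal (x - y)
          = -((stackIdDiag x - stackIdDiag y)ᵀ * P * (stackIdDiag x - stackIdDiag y)) := by
        rw [hdiff, Matrix.transpose_mul, Matrix.conjTranspose_eq_transpose_of_trivial]
        simp only [Matrix.mul_assoc, Matrix.neg_mul, Matrix.mul_neg]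
      rw [e, hlin x y a b hab]
      obtain rfl : b = 1 - a := by linarith
      simp only [Matrix.transpose_add, Matrix.transpose_sub, Matrix.transpose_smul,
        Matrix.add_mul, Matrix.mul_add, Matrix.sub_mul, Matrix.mul_sub, Matrix.smul_mul,
        Matrix.mul_smul]
      module
    rw [key]
    exact ((hx.smul ha).add (hy.smul hb)).add
      ((hP22.conjTranspose_mul_mul_same _).smul (mul_nonneg ha hb))
  intro θ hθ
  have hsub : convexHull ℝ (Set.univ.pi fun i => ({κ₁ i, κ₂ i} : Set ℝ)) ⊆
      {θ : Fin n → ℝ | ((stackIdDiag θ)ᵀ * P * stackIdDiag θ).PosSemidef} := by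
    refine convexHull_min ?_ hconv
    intro v hv
    exact hvert v fun i => by simpa using hv i (Set.mem_univ i)
  apply hsub
  rw [convexHull_pi]
  intro i _
  beta_reduce
  rw [convexHull_pair, segment_eq_Icc (hκ i)]
  exact hθ i
end

section
/- Let n ≥ 1, let P be a symmetric real 2n × 2n matrix with [0; Iₙ]ᵀ P [0; Iₙ] ⪯ 0 (negative semidefinite), and let κ₁, κ₂ ∈ ℝⁿ with κ₁ᵢ ≤ κ₂ᵢ for all i. Suppose that for every θ ∈ ℝⁿ with θᵢ ∈ {κ₁ᵢ, κ₂ᵢ} for all i, the matrix [Iₙ; Θ(θ)]ᵀ P [Iₙ; Θ(θ)] is positive semidefinite. Let φ₁, …, φₙ : ℝ → ℝ satisfy φᵢ(0) = 0 and let φᵢ belong to the sector [κ₁ᵢ, κ₂ᵢ] on ℝ for each i. Then for every q ∈ ℝⁿ, letting p ∈ ℝⁿ be defined by pᵢ = φᵢ(qᵢ), we have (q; p)ᵀ P (q; p) ≥ 0. -/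
open Matrix

theorem quad_congr_aux {n : ℕ} (P : Matrix (Fin n ⊕ Fin n) (Fin n ⊕ Fin n) ℝ)
    (M : Matrix (Fin n ⊕ Fin n) (Fin n) ℝ) (x : Fin n → ℝ) :
    x ⬝ᵥ (Mᵀ * P * M) *ᵥ x = (M *ᵥ x) ⬝ᵥ P *ᵥ (M *ᵥ x) := by
  rw [← Matrix.mulVec_mulVec, ← Matrix.mulVec_mulVec, Matrix.dotProduct_mulVec,
    Matrix.vecMul_transpose]

theorem quad_concave_aux {m : Type*} [Fintype m] (P : Matrix m m ℝ) (u v : m → ℝ) (a b : ℝ)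
    (hab : a + b = 1) :
    (a • u + b • v) ⬝ᵥ P *ᵥ (a • u + b • v) =
      a * (u ⬝ᵥ P *ᵥ u) + b * (v ⬝ᵥ P *ᵥ v) - a * b * ((u - v) ⬝ᵥ P *ᵥ (u - v)) := by
  obtain rfl : b = 1 - a := by linarith
  simp only [Matrix.mulVec_add, Matrix.mulVec_sub, Matrix.mulVec_smul, add_dotProduct,
    sub_dotProduct, dotProduct_add, dotProduct_sub, smul_dotProduct, dotProduct_smul, smul_eq_mul]
  ring

theorem pointwise_quadratic_constraint_of_sector
    (n : ℕ) (hn : 1 ≤ n)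
    (P : Matrix (Fin n ⊕ Fin n) (Fin n ⊕ Fin n) ℝ) (hP : P.IsSymm)
    (hP22 : (-((stackZeroId n)ᵀ * P * stackZeroId n)).PosSemidef)
    (κ₁ κ₂ : Fin n → ℝ) (hκ : ∀ i, κ₁ i ≤ κ₂ i)
    (hvert : ∀ θ : Fin n → ℝ, (∀ i, θ i = κ₁ i ∨ θ i = κ₂ i) →
      ((stackIdDiag θ)ᵀ * P * stackIdDiag θ).PosSemidef)
    (φ : Fin n → ℝ → ℝ) (hφ0 : ∀ i, φ i 0 = 0)
    (hsector : ∀ i, InSector (φ i) (κ₁ i) (κ₂ i) Set.univ) :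
    ∀ q : Fin n → ℝ,
      0 ≤ (Sum.elim q (fun i => φ i (q i))) ⬝ᵥ
        P.mulVec (Sum.elim q (fun i => φ i (q i))) := by
  intro q
  have hconv : Convex ℝ {p : Fin n → ℝ | 0 ≤ (Sum.elim q p) ⬝ᵥ P *ᵥ (Sum.elim q p)} := by
    intro x hx y hy a b ha hb hab
    simp only [Set.mem_ofPred_eq] at hx hy ⊢
    have e : Sum.elim q (a • x + b • y) = a • Sum.elim q x + b • Sum.elim q y := by
      ext (i | i)
      · simp [← add_mul, hab]
      · simp
    rw [e, quad_concave_aux P _ _ a b hab]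
    have h0 := hP22.dotProduct_mulVec_nonneg (x - y)
    have e2 : Sum.elim q x - Sum.elim q y = stackZeroId n *ᵥ (x - y) := by
      rw [stackZeroId, Matrix.fromRows_mulVec]
      ext (i | i) <;> simp
    rw [star_trivial, Matrix.neg_mulVec, dotProduct_neg, quad_congr_aux, ← e2] at h0
    have h1 := mul_nonneg ha hx
    have h2 := mul_nonneg hb hy
    have h3 := mul_nonneg (mul_nonneg ha hb) h0
    linarith
  have hsub : Set.univ.pi (fun i => ({κ₁ i * q i, κ₂ i * q i} : Set ℝ)) ⊆
      {p : Fin n → ℝ | 0 ≤ (Sum.elim q p) ⬝ᵥ P *ᵥ (Sum.elim q p)} := by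
    intro p hp
    have hθ : ∀ i, ∃ t, (t = κ₁ i ∨ t = κ₂ i) ∧ p i = t * q i := by
      intro i
      rcases hp i (Set.mem_univ i) with h | h
      · exact ⟨_, Or.inl rfl, h⟩
      · exact ⟨_, Or.inr rfl, h⟩
    choose θ h1 h2 using hθ
    have h0 := (hvert θ h1).dotProduct_mulVec_nonneg q
    have e : stackIdDiag θ *ᵥ q = Sum.elim q p := by
      rw [stackIdDiag, Matrix.fromRows_mulVec]
      ext (i | i)
      · simp
      · simp [Matrix.mulVec_diagonal, h2]
    rwa [star_trivial, quad_congr_aux, e] at h0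
  have hmem : (fun i => φ i (q i)) ∈
      convexHull ℝ (Set.univ.pi (fun i => ({κ₁ i * q i, κ₂ i * q i} : Set ℝ))) := by
    rw [convexHull_pi]
    intro i _
    beta_reduce
    rw [convexHull_pair, segment_eq_uIcc, Set.mem_uIcc]
    obtain ⟨h1, h2⟩ := hsector i (q i) (Set.mem_univ _)
    rcases lt_trichotomy (q i) 0 with h | h | h
    · right
      constructor <;> nlinarith
    · simp [h, hφ0]
    · left
      constructor <;> nlinarith
  exact convexHull_min hsub hconv hmem
end

section
/- Let k be a kernel on ℝ with k(0,0) > 0, and define k₀(x, x′) = k(x, x′) − k(x, 0) k(x′, 0) / k(0,0). Let x₁, …, x_N ∈ ℝ, y ∈ ℝᴺ and λ > 0. Let μ⁰_D and k⁰_D denote the GPR posterior mean and covariance obtained with prior covariance k₀, data points x₁, …, x_N, observations y and noise level λ. On the other hand, consider the augmented data consisting of the noise-free virtual data point (0, 0) together with (x₁, y₁), …, (x_N, y_N): the augmented Gram matrix K̃ = (k(x̃ᵢ, x̃ⱼ))_{i,j=0}^N with x̃₀ = 0, x̃ₙ = xₙ, plus the noise matrix Λ = diag(0, λ, …, λ),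 is invertible, and the resulting posterior mean μ̃(x) = k̃(x)ᵀ (K̃ + Λ)⁻¹ ỹ (with k̃(x) = (k(x, x̃ₙ))_{n=0}^N and ỹ = (0, y₁, …, y_N)) and posterior covariance k̃_D(x, x′) = k(x, x′) − k̃(x)ᵀ (K̃ + Λ)⁻¹ k̃(x′) satisfy μ̃(x) = μ⁰_D(x) and k̃_D(x, x′) = k⁰_D(x, x′) for all x, x′ ∈ ℝ. That is, using the kernel k₀ has the same effect as conditioning the GP prior with covariance k on the noise-free virtual data point (0, 0). -/
open Matrix

/-- A kernel on a set `X` is a symmetric function `k : X × X → ℝ` whose Gram matrix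
at any finite collection of points is positive semidefinite. -/
def IsKernel {X : Type*} (k : X → X → ℝ) : Prop :=
  (∀ x x' : X, k x x' = k x' x) ∧
  ∀ (N : ℕ) (x : Fin N → X), (Matrix.of fun i j => k (x i) (x j)).PosSemidef

theorem kernel_k0_equals_conditioning_on_virtual_datapoint
    (k : ℝ → ℝ → ℝ) (hk : IsKernel k) (hk00 : 0 < k 0 0)
    (k₀ : ℝ → ℝ → ℝ)
    (hk₀ : ∀ x x' : ℝ, k₀ x x' = k x x' - k x 0 * k x' 0 / k 0 0)
    (N : ℕ) (x y : Fin N → ℝ) (lam : ℝ) (hlam : 0 < lam)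
    -- GPR with prior covariance `k₀`, data points `x`, observations `y`, noise level `lam`:
    (K₀ : Matrix (Fin N) (Fin N) ℝ) (hK₀ : K₀ = Matrix.of fun i j => k₀ (x i) (x j))
    (μ₀ : ℝ → ℝ)
    (hμ₀ : ∀ x' : ℝ, μ₀ x' =
      (fun n => k₀ x' (x n)) ⬝ᵥ (K₀ + lam • (1 : Matrix (Fin N) (Fin N) ℝ))⁻¹.mulVec y)
    (kpost₀ : ℝ → ℝ → ℝ)
    (hkpost₀ : ∀ x' x'' : ℝ, kpost₀ x' x'' = k₀ x' x'' -
      (fun n => k₀ x' (x n)) ⬝ᵥ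
        (K₀ + lam • (1 : Matrix (Fin N) (Fin N) ℝ))⁻¹.mulVec (fun n => k₀ x'' (x n)))
    -- GPR with prior covariance `k` and the augmented data including the
    -- noise-free virtual data point `(0, 0)`:
    (xt : Fin (N + 1) → ℝ) (hxt : xt = Fin.cons 0 x)
    (yt : Fin (N + 1) → ℝ) (hyt : yt = Fin.cons 0 y)
    (Kt : Matrix (Fin (N + 1)) (Fin (N + 1)) ℝ)
    (hKt : Kt = Matrix.of fun i j => k (xt i) (xt j))
    (Λ : Matrix (Fin (N + 1)) (Fin (N + 1)) ℝ)
    (hΛ : Λ = Matrix.diagonal (Fin.cons 0 fun _ => lam))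
    (μt : ℝ → ℝ)
    (hμt : ∀ x' : ℝ, μt x' = (fun n => k x' (xt n)) ⬝ᵥ (Kt + Λ)⁻¹.mulVec yt)
    (ktpost : ℝ → ℝ → ℝ)
    (hktpost : ∀ x' x'' : ℝ, ktpost x' x'' = k x' x'' -
      (fun n => k x' (xt n)) ⬝ᵥ (Kt + Λ)⁻¹.mulVec (fun n => k x'' (xt n))) :
    IsUnit (Kt + Λ) ∧ (∀ x' : ℝ, μt x' = μ₀ x') ∧
      ∀ x' x'' : ℝ, ktpost x' x'' = kpost₀ x' x'' := by
  obtain ⟨hsymm, hpsd⟩ := hk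
  have ha : k 0 0 ≠ 0 := ne_of_gt hk00
  -- `K₀` is positive semidefinite as a congruence of the augmented Gram matrix.
  have hK₀psd : K₀.PosSemidef := by
    have h1 := hpsd (N + 1) (Fin.cons 0 x : Fin (N + 1) → ℝ)
    have h2 := h1.conjTranspose_mul_mul_same
      (Matrix.of (Fin.cons (fun j => - k (x j) 0 / k 0 0)
        (fun i j => (1 : Matrix (Fin N) (Fin N) ℝ) i j) : Fin (N + 1) → Fin N → ℝ))
    convert h2 using 1
    rw [hK₀]
    ext i j
    simp only [Matrix.mul_apply, Fin.sum_univ_succ, Matrix.conjTranspose_apply, Matrix.of_apply,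
      Fin.cons_zero, Fin.cons_succ, Matrix.one_apply, star_trivial, hk₀, ite_mul, mul_ite,
      one_mul, mul_one, zero_mul, mul_zero, Finset.sum_ite_eq, Finset.sum_ite_eq',
      Finset.mem_univ, if_true]
    rw [hsymm 0 (x j)]
    field_simp
    ring
  have hM : (K₀ + lam • (1 : Matrix (Fin N) (Fin N) ℝ)).PosDef :=
    Matrix.PosDef.posSemidef_add hK₀psd (Matrix.PosDef.one.smul hlam)
  have hMu : IsUnit (K₀ + lam • (1 : Matrix (Fin N) (Fin N) ℝ)) := hM.isUnit
  have hMdet := (Matrix.isUnit_iff_isUnit_det _).1 hMu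
  -- explicit solution of the augmented system
  have hsol : ∀ (c : ℝ) (w : Fin N → ℝ) (z : Fin N → ℝ),
      z = (K₀ + lam • (1 : Matrix (Fin N) (Fin N) ℝ))⁻¹.mulVec
        (fun n => w n - c * k (x n) 0 / k 0 0) →
      (Kt + Λ).mulVec (Fin.cons ((c - ∑ n, k (x n) 0 * z n) / k 0 0) z) = Fin.cons c w := by
    intro c w z hz
    have hMz : (K₀ + lam • (1 : Matrix (Fin N) (Fin N) ℝ)).mulVec z =
        fun n => w n - c * k (x n) 0 / k 0 0 := by
      rw [hz, Matrix.mulVec_mulVec, Matrix.mul_nonsing_inv _ hMdet, Matrix.one_mulVec]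
    funext i
    rw [Matrix.add_mulVec, hΛ, Pi.add_apply, Matrix.mulVec_diagonal, hKt, hxt]
    refine Fin.cases ?_ (fun n => ?_) i
    · simp only [Matrix.mulVec, dotProduct, Fin.sum_univ_succ, Matrix.of_apply,
        Fin.cons_zero, Fin.cons_succ]
      simp only [hsymm 0 (x _)]
      field_simp
      ring
    · have h := congrFun hMz n
      rw [Matrix.add_mulVec, Pi.add_apply, Matrix.smul_mulVec, Matrix.one_mulVec, hK₀] at h
      simp only [Matrix.mulVec, dotProduct, Matrix.of_apply, Pi.smul_apply, smul_eq_mul,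
        hk₀] at h
      have h3 : ∑ j, (k (x n) (x j) - k (x n) 0 * k (x j) 0 / k 0 0) * z j =
          ∑ j, k (x n) (x j) * z j - k (x n) 0 / k 0 0 * ∑ j, k (x j) 0 * z j := by
        rw [Finset.mul_sum, ← Finset.sum_sub_distrib]
        exact Finset.sum_congr rfl fun j _ => by ring
      rw [h3] at h
      simp only [Matrix.mulVec, dotProduct, Fin.sum_univ_succ, Matrix.of_apply,
        Fin.cons_zero, Fin.cons_succ]
      linear_combination h
  have hU : IsUnit (Kt + Λ) := by
    rw [← Matrix.mulVec_surjective_iff_isUnit]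
    intro v
    refine ⟨_, (hsol (v 0) (fun n => v n.succ) _ rfl).trans ?_⟩
    exact Fin.cons_self_tail v
  have hUdet := (Matrix.isUnit_iff_isUnit_det _).1 hU
  have hval : ∀ (x' c : ℝ) (w : Fin N → ℝ),
      (fun n => k x' (xt n)) ⬝ᵥ (Kt + Λ)⁻¹.mulVec (Fin.cons c w) =
        k x' 0 * c / k 0 0 + (fun n => k₀ x' (x n)) ⬝ᵥ
          (K₀ + lam • (1 : Matrix (Fin N) (Fin N) ℝ))⁻¹.mulVec
            (fun n => w n - c * k (x n) 0 / k 0 0) := by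
    intro x' c w
    obtain ⟨z, hz⟩ : ∃ z, z = (K₀ + lam • (1 : Matrix (Fin N) (Fin N) ℝ))⁻¹.mulVec
        (fun n => w n - c * k (x n) 0 / k 0 0) := ⟨_, rfl⟩
    rw [← hz, ← hsol c w z hz, Matrix.mulVec_mulVec, Matrix.nonsing_inv_mul _ hUdet,
      Matrix.one_mulVec, hxt]
    simp only [dotProduct, Fin.sum_univ_succ, Fin.cons_zero, Fin.cons_succ, hk₀]
    have h3 : ∑ j, (k x' (x j) - k x' 0 * k (x j) 0 / k 0 0) * z j =
        ∑ j, k x' (x j) * z j - k x' 0 / k 0 0 * ∑ j, k (x j) 0 * z j := by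
      rw [Finset.mul_sum, ← Finset.sum_sub_distrib]
      exact Finset.sum_congr rfl fun j _ => by ring
    rw [h3]
    ring
  refine ⟨hU, fun x' => ?_, fun x' x'' => ?_⟩
  · rw [hμt, hμ₀, hyt, hval]
    simp
  · have hc : (fun n => k x'' (xt n)) = Fin.cons (k x'' 0) (fun n => k x'' (x n)) := by
      funext i
      rw [hxt]
      refine Fin.cases ?_ (fun n => ?_) i <;> simp
    have hw : (fun n => k x'' (x n) - k x'' 0 * k (x n) 0 / k 0 0) =
        fun n => k₀ x'' (x n) := by
      funext n
      rw [hk₀]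
    rw [hktpost, hkpost₀, hc, hval, hw, hk₀ x' x'']
    ring
end
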